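/- arXiv:0806.3583 — 3 statements merged into one kernel-verified Lean document; each statement's English description precedes it below -/
import Mathlib

section
/- Fix integers b ≥ 2 and n ≥ 1, and let A_1, A_2 : {1,…,n} → {0,…,b−1}. Form the list of pairs whose i-th entry is (A_2(π(A_1)(i)), A_1(i)), and let ρ be the permutation of {1,…,n} ranking these pairs from lexicographically smallest to largest (comparing the first coordinate first, and breaking ties by position, i.e., ρ(i) = #{i' : pair(i') <_lex pair(i)} + #{i' ≤ i : pair(i') = pair(i)}). Then ρ = π(A_2) ∘ π(A_1), the composition of the two ranking permutations. -/
/-- The ranking permutation (0-indexed): `rank v i` is the number of positions `i'`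
whose value is smaller than `v i`, or equal to `v i` but occurring earlier.  This labels
the entries from smallest to largest, breaking ties by position. -/
def rank {n : ℕ} {α : Type*} [LinearOrder α] (v : Fin n → α) (i : Fin n) : Fin n :=
  ⟨(Finset.univ.filter fun i' => v i' < v i ∨ (v i' = v i ∧ i' < i)).card, by
    calc (Finset.univ.filter fun i' => v i' < v i ∨ (v i' = v i ∧ i' < i)).card
        ≤ (Finset.univ.erase i).card := by
          apply Finset.card_le_card
          intro x hx
          rw [Finset.mem_filter] at hx
          rw [Finset.mem_erase]
          refine ⟨?_, Finset.mem_univ x⟩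
          rintro rfl
          rcases hx.2 with h | h
          · exact lt_irrefl _ h
          · exact lt_irrefl _ h.2
      _ < Finset.univ.card := Finset.card_erase_lt_of_mem (Finset.mem_univ i)
      _ = n := by simp⟩

/-!
Each entry `i` of `v` carries the key `(v i, i)`; keys are distinct, and `rank v i` counts the keys
below that of `i`. Hence `rank v` is the only map `Fin n → Fin n` that orders positions as their
keys do. The composite `rank w ∘ rank v` orders positions by `(w (rank v i), rank v i)`, that is, by
`(w (rank v i), (v i, i))`, which up to reassociation is the key `((w (rank v i), v i), i)` of the
list of pairs.
-/

section

variable {ι α β : Type*}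

/-- The key by which a stable sort of `v` orders the positions: the entry first, then, to break
ties, the position itself. -/
def sortKey (v : ι → α) (i : ι) : α ×ₗ ι :=
  toLex (v i, i)

theorem sortKey_injective (v : ι → α) : Function.Injective (sortKey v) :=
  fun _ _ h => congrArg (fun k => (ofLex k).2) h

theorem sortKey_lt_sortKey_iff [LT ι] [LT α] (v : ι → α) (i j : ι) :
    sortKey v i < sortKey v j ↔ v i < v j ∨ v i = v j ∧ i < j :=
  Prod.Lex.toLex_lt_toLex

variable {n : ℕ}

theorem card_filter_apply_lt [Fintype ι] {f : ι → Fin n} (hf : Function.Bijective f)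
    (m : Fin n) : (Finset.univ.filter fun i => f i < m).card = m := by
  rw [← Fin.card_Iio m]
  exact Finset.card_bijective f hf (by simp)

variable [LinearOrder α] [LinearOrder β]

theorem coe_rank_eq_card_sortKey_lt (v : Fin n → α) (i : Fin n) :
    (rank v i : ℕ) = (Finset.univ.filter fun j => sortKey v j < sortKey v i).card := by
  simp only [rank, sortKey_lt_sortKey_iff]

theorem rank_lt_rank_iff (v : Fin n → α) (i j : Fin n) :
    rank v i < rank v j ↔ sortKey v i < sortKey v j := by
  rw [Fin.lt_def, coe_rank_eq_card_sortKey_lt, coe_rank_eq_card_sortKey_lt]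
  constructor
  · contrapose!
    intro hji
    exact Finset.card_le_card
      (Finset.monotone_filter_right _ fun _ _ hk => lt_of_lt_of_le hk hji)
  · intro hij
    refine Finset.card_lt_card (Finset.ssubset_iff_of_subset
      (Finset.monotone_filter_right _ fun _ _ hk => lt_trans hk hij) |>.mpr ⟨i, ?_, ?_⟩)
    · simpa using hij
    · simp

theorem eq_rank_of_lt_iff_sortKey_lt {v : Fin n → α} {f : Fin n → Fin n}
    (hf : ∀ i j, f i < f j ↔ sortKey v i < sortKey v j) : f = rank v := by
  have f_injective : Function.Injective f := fun i j hij =>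
    sortKey_injective v <| le_antisymm
      (not_lt.mp (mt (hf j i).mpr hij.not_gt)) (not_lt.mp (mt (hf i j).mpr hij.not_lt))
  have f_bijective : Function.Bijective f := Finite.injective_iff_bijective.mp f_injective
  ext i
  calc (f i : ℕ) = (Finset.univ.filter fun j => f j < f i).card :=
        (card_filter_apply_lt f_bijective (f i)).symm
    _ = (Finset.univ.filter fun j => sortKey v j < sortKey v i).card := by simp only [hf]
    _ = rank v i := (coe_rank_eq_card_sortKey_lt v i).symm

theorem rank_lex_pairs_eq_comp_general (v : Fin n → α) (w : Fin n → β) :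
    rank (fun i => toLex (w (rank v i), v i)) = rank w ∘ rank v := by
  refine (eq_rank_of_lt_iff_sortKey_lt fun i j => ?_).symm
  calc rank w (rank v i) < rank w (rank v j)
      ↔ toLex (w (rank v i), rank v i) < toLex (w (rank v j), rank v j) :=
        rank_lt_rank_iff w _ _
    _ ↔ toLex (w (rank v i), sortKey v i) < toLex (w (rank v j), sortKey v j) := by
        simp only [Prod.Lex.toLex_lt_toLex, rank_lt_rank_iff]
    _ ↔ toLex (toLex (w (rank v i), v i), i) < toLex (toLex (w (rank v j), v j), j) :=
        (Prod.Lex.prodLexAssoc β α (Fin n)).symm.lt_iff_lt.symm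

end

/-- **The two-column star map lemma** (Lemma 6, `j = 2` case, of Diaconis–Fulman).
Given two columns `A₁ A₂` of base-`b` digits, form the list of pairs whose `i`-th entry is
`(A₂(π(A₁)(i)), A₁(i))`, ordered lexicographically (first coordinate first, ties broken by
position).  Then the ranking permutation of this list of pairs is the composition
`π(A₂) ∘ π(A₁)`. -/
theorem rank_lex_pairs_eq_comp (b n : ℕ) (hb : 2 ≤ b) (hn : 1 ≤ n)
    (A₁ A₂ : Fin n → Fin b) :
    rank (fun i : Fin n => toLex (A₂ (rank A₁ i), A₁ i)) =
      rank A₂ ∘ rank A₁ := by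
  exact rank_lex_pairs_eq_comp_general A₁ A₂
end

section
/- Fix integers b ≥ 2 and n ≥ 1, and let P_b be the Holte carries matrix with stationary distribution π(j) = A(n,j)/n!. Then for every r ≥ 0 the function j ↦ (P_b)^r(0,j)/π(j) is non-increasing in j on {0,…,n−1}; consequently the separation distance of the carries chain started at 0, sep(r) = max_{0≤j≤n−1} [1 − (P_b)^r(0,j)/π(j)], is attained at the state j = n−1, i.e., sep(r) = 1 − (P_b)^r(0,n−1)/π(n−1). -/
/-- The number of descents of a map `σ : Fin n → Fin n`:
the number of indices `i` with `σ (i+1) < σ i`. -/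
noncomputable def descents {n : ℕ} (σ : Fin n → Fin n) : ℕ :=
  Nat.card {i : Fin n // ∃ h : i.1 + 1 < n, σ ⟨i.1 + 1, h⟩ < σ i}

/-- Holte's "amazing matrix" as an `n × n` real matrix: the carries Markov chain has
`P_b(i,j) = b^{-n} · #{(x_1,…,x_n) ∈ {0,…,b−1}^n : jb ≤ i + x_1 + ⋯ + x_n ≤ (j+1)b − 1}`. -/
noncomputable def PM (b n : ℕ) : Matrix (Fin n) (Fin n) ℝ :=
  Matrix.of fun i j =>
    (Nat.card {x : Fin n → Fin b //
        (j : ℕ) * b ≤ (i : ℕ) + ∑ t, (x t : ℕ) ∧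
          (i : ℕ) + ∑ t, (x t : ℕ) ≤ ((j : ℕ) + 1) * b - 1} : ℝ) / b ^ n

/-- The stationary distribution of the carries chain: `π(j) = A(n,j)/n!` where `A(n,j)`
is the Eulerian number, the number of permutations of `{1,…,n}` with exactly `j`
descents. -/
noncomputable def eulerStat (n : ℕ) (j : ℕ) : ℝ :=
  (Nat.card {σ : Equiv.Perm (Fin n) // descents ⇑σ = j} : ℝ) / (Nat.factorial n)

/-!
Order distributions by likelihood ratio. The two-row Cauchy–Binet identity shows that a totally
positive kernel of order two preserves this order. Holte's matrix is such a kernel, because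
`P_b(i,j)` is `b⁻ⁿ` times the coefficient of `x^(jb+b-1)` in `xⁱ (1 + x + ⋯ + x^(b-1))^(n+1)`, and
the Toeplitz kernel of a product of series is the composition of the Toeplitz kernels of the
factors.

Worpitzky's identity gives `A_n(x) = (1 - x)^(n+1) ∑ₖ (k+1)ⁿ xᵏ` for the Eulerian polynomial, so
`A_n(x) (1 + x + ⋯ + x^(b-1))^(n+1) = (1 - x^b)^(n+1) ∑ₖ (k+1)ⁿ xᵏ`. Extracting the coefficients of
index `jb + b - 1` turns the right-hand side into `bⁿ A_n(x)`, which says that `π` is stationary.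

The point mass at the least state `0` precedes `π`, hence its image under `P_b^r` precedes
`π P_b^r = π`, which is the claimed monotonicity.
-/

open Finset PowerSeries Matrix

section LikelihoodRatio

variable {ι κ R : Type*}

/-- The likelihood ratio order `μ ≤ ν`: the ratio `μ / ν` is non-increasing, stated by
cross-multiplication so that zeros of `ν` need no special treatment. -/
def LikelihoodRatioLE [LE ι] [Mul R] [LE R] (μ ν : ι → R) : Prop :=
  ∀ ⦃j l⦄, j ≤ l → μ l * ν j ≤ μ j * ν l

/-- A kernel is totally positive of order two when its `2 × 2` minors are nonnegative, that is,
when its rows increase in the likelihood ratio order. -/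
def IsTP2 [LE ι] [LE κ] [Mul R] [LE R] (K : ι → κ → R) : Prop :=
  ∀ ⦃i i'⦄, i ≤ i' → LikelihoodRatioLE (K i) (K i')

lemma two_mul_sum_mul_sum_sub_sum_mul_sum [CommRing R] (J : Finset ι) (p q s t : ι → R) :
    2 * ((∑ j ∈ J, p j * s j) * (∑ j ∈ J, q j * t j) -
        (∑ j ∈ J, p j * t j) * (∑ j ∈ J, q j * s j)) =
      ∑ j ∈ J, ∑ l ∈ J, (p j * q l - p l * q j) * (s j * t l - s l * t j) := by
  let crossTerm (j l : ι) : R := p j * s j * (q l * t l) - p j * t j * (q l * s l)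
  have hcross : (∑ j ∈ J, p j * s j) * (∑ j ∈ J, q j * t j) -
      (∑ j ∈ J, p j * t j) * (∑ j ∈ J, q j * s j) = ∑ j ∈ J, ∑ l ∈ J, crossTerm j l := by
    simp only [crossTerm, sum_mul_sum, sum_sub_distrib]
  rw [hcross, two_mul]
  nth_rw 2 [sum_comm]
  simp only [← sum_add_distrib]
  refine sum_congr rfl fun j _ => sum_congr rfl fun l _ => ?_
  ring

namespace LikelihoodRatioLE

lemma sum_mul [LinearOrder ι] [LE κ] [CommRing R] [LinearOrder R] [IsStrictOrderedRing R]
    {μ ν : ι → R} {K : ι → κ → R} (h : LikelihoodRatioLE μ ν) (hK : IsTP2 K) (J : Finset ι) :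
    LikelihoodRatioLE (fun m => ∑ j ∈ J, μ j * K j m) (fun m => ∑ j ∈ J, ν j * K j m) := by
  intro m m' hm
  have minors_nonneg : 0 ≤ ∑ j ∈ J, ∑ l ∈ J,
      (μ j * ν l - μ l * ν j) * (K j m * K l m' - K l m * K j m') := by
    refine sum_nonneg fun j _ => sum_nonneg fun l _ => ?_
    rcases le_total j l with hjl | hlj
    · exact mul_nonneg (sub_nonneg.2 (h hjl)) (by linarith [hK hjl hm])
    · exact mul_nonneg_of_nonpos_of_nonpos (sub_nonpos.2 (h hlj)) (by linarith [hK hlj hm])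
  rw [← two_mul_sum_mul_sum_sub_sum_mul_sum] at minors_nonneg
  linarith

lemma single_of_isBot [PartialOrder ι] [DecidableEq ι] [Semiring R] [PartialOrder R]
    [IsOrderedRing R] {i₀ : ι} (hi₀ : IsBot i₀) {ν : ι → R} (hν : 0 ≤ ν) :
    LikelihoodRatioLE (Pi.single i₀ 1) ν := by
  intro j l hjl
  rcases eq_or_ne l i₀ with rfl | hl
  · rw [hjl.antisymm (hi₀ j)]
  · rw [Pi.single_eq_of_ne hl, zero_mul]
    have hsingle : (0 : ι → R) ≤ Pi.single i₀ 1 := Pi.single_nonneg.2 zero_le_one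
    exact mul_nonneg (hsingle j) (hν l)

lemma antitone_div [Preorder ι] [Field R] [LinearOrder R] [IsStrictOrderedRing R] {μ ν : ι → R}
    (h : LikelihoodRatioLE μ ν) (hν : ∀ j, 0 < ν j) : Antitone fun j => μ j / ν j :=
  fun j l hjl => (div_le_div_iff₀ (hν l) (hν j)).2 (h hjl)

variable [Fintype ι] [LinearOrder ι] [CommRing R] [LinearOrder R]
  [IsStrictOrderedRing R] {P : Matrix ι ι R} {μ ν : ι → R}

lemma vecMul_pow_of_stationary (hP : IsTP2 P) (hν : ν ᵥ* P = ν) (h : LikelihoodRatioLE μ ν)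
    (r : ℕ) : LikelihoodRatioLE (μ ᵥ* P ^ r) ν := by
  induction r with
  | zero => rwa [pow_zero, vecMul_one]
  | succ r ih =>
    rw [pow_succ, ← vecMul_vecMul, ← hν]
    exact ih.sum_mul hP univ

end LikelihoodRatioLE

end LikelihoodRatio

section ToeplitzKernel

variable {R : Type*}

/-- A power series `f` is a Pólya frequency series of order two when the Toeplitz kernel
`(i, m) ↦ f_{m-i}` is totally positive of order two; the factor `X ^ i` makes the entries with
`m < i` vanish. -/
def IsPF2 [Semiring R] [LE R] (f : R⟦X⟧) : Prop :=
  IsTP2 fun i m : ℕ => coeff m (X ^ i * f)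

lemma coeff_mul_eq_sum_range_mul_coeff_X_pow_mul [CommSemiring R] (f g : R⟦X⟧) {m M : ℕ}
    (hm : m < M) : coeff m (f * g) = ∑ j ∈ range M, coeff j f * coeff m (X ^ j * g) := by
  rw [coeff_mul, Nat.sum_antidiagonal_eq_sum_range_succ fun j l => coeff j f * coeff l g]
  refine sum_subset_zero_on_sdiff (range_subset_range.2 hm) (fun j hj => ?_) fun j hj => ?_
  · rw [mem_sdiff, mem_range, mem_range] at hj
    rw [coeff_X_pow_mul', if_neg (by omega), mul_zero]
  · rw [coeff_X_pow_mul', if_pos (Nat.lt_succ_iff.1 (mem_range.1 hj))]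

variable [CommRing R] [LinearOrder R] [IsStrictOrderedRing R]

lemma isPF2_one : IsPF2 (1 : R⟦X⟧) := by
  intro i i' hi m m' hm
  simp only [mul_one, coeff_X_pow]
  split_ifs <;> first | omega | norm_num

lemma IsPF2.mul {f g : R⟦X⟧} (hf : IsPF2 f) (hg : IsPF2 g) : IsPF2 (f * g) := by
  intro i i' hi m m' hm
  have hcut (k : ℕ) {l : ℕ} (hl : l ≤ m') := coeff_mul_eq_sum_range_mul_coeff_X_pow_mul
    (X ^ k * f) g (Nat.lt_succ_iff.2 hl)
  simp only [← mul_assoc, hcut _ hm, hcut _ le_rfl]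
  exact (hf hi).sum_mul hg (range (m' + 1)) hm

lemma IsPF2.pow {f : R⟦X⟧} (hf : IsPF2 f) (N : ℕ) : IsPF2 (f ^ N) := by
  induction N with
  | zero => rw [pow_zero]; exact isPF2_one
  | succ N ih => rw [pow_succ]; exact ih.mul hf

end ToeplitzKernel

section BoxSeries

variable {R : Type*}

/-- The series `1 + X + ⋯ + X ^ (b - 1)`, the generating function of a single base-`b` digit. -/
noncomputable def boxSeries [Semiring R] (b : ℕ) : R⟦X⟧ :=
  ∑ d ∈ range b, X ^ d

lemma coeff_X_pow_mul_boxSeries [Semiring R] (b i m : ℕ) :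
    coeff m (X ^ i * boxSeries b : R⟦X⟧) = if i ≤ m ∧ m < i + b then 1 else 0 := by
  simp only [boxSeries, coeff_X_pow_mul', map_sum, coeff_X_pow, sum_ite_eq, mem_range]
  split_ifs <;> first | rfl | omega

lemma isPF2_boxSeries [CommRing R] [LinearOrder R] [IsStrictOrderedRing R] (b : ℕ) :
    IsPF2 (boxSeries b : R⟦X⟧) := by
  intro i i' hi m m' hm
  simp only [coeff_X_pow_mul_boxSeries]
  split_ifs <;> first | omega | norm_num

lemma boxSeries_pow [CommSemiring R] (b n : ℕ) :
    (boxSeries b ^ n : R⟦X⟧) = ∑ x : Fin n → Fin b, X ^ ∑ t, (x t : ℕ) := by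
  simp only [boxSeries, Finset.sum_range, Fintype.sum_pow, prod_pow_eq_pow_sum]

lemma boxSeries_mul_one_sub_X [Ring R] (b : ℕ) :
    (boxSeries b * (1 - X) : R⟦X⟧) = 1 - X ^ b :=
  geom_sum_mul_neg X b

end BoxSeries

section Decimation

variable {R : Type*}

/-- The linear operator `∑ₘ aₘ Xᵐ ↦ ∑ⱼ a_{jb+b-1} Xʲ`, keeping every `b`-th coefficient. -/
noncomputable def decimate [Semiring R] (b : ℕ) : R⟦X⟧ →ₗ[R] R⟦X⟧ where
  toFun f := mk fun j => coeff (j * b + (b - 1)) f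
  map_add' f g := by ext; simp
  map_smul' c f := by ext; simp

@[simp]
lemma coeff_decimate [Semiring R] (b j : ℕ) (f : R⟦X⟧) :
    coeff j (decimate b f) = coeff (j * b + (b - 1)) f :=
  coeff_mk j fun j => coeff (j * b + (b - 1)) f

lemma decimate_mul_X_pow [Semiring R] {b : ℕ} (hb : 0 < b) (f : R⟦X⟧) :
    decimate b (f * X ^ b) = decimate b f * X := by
  ext (_ | j)
  · rw [coeff_decimate, coeff_mul_X_pow', if_neg (by omega), coeff_zero_mul_X]
  · rw [coeff_decimate, coeff_succ_mul_X, coeff_decimate, Nat.succ_mul, add_right_comm,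
      coeff_mul_X_pow]

lemma decimate_mul_one_sub_X_pow_pow [Ring R] {b : ℕ} (hb : 0 < b) (f : R⟦X⟧) (N : ℕ) :
    decimate b (f * (1 - X ^ b) ^ N) = decimate b f * (1 - X) ^ N := by
  induction N with
  | zero => simp only [pow_zero, mul_one]
  | succ N ih =>
    rw [pow_succ, pow_succ, ← mul_assoc, ← mul_assoc, ← ih, mul_one_sub, mul_one_sub, map_sub,
      decimate_mul_X_pow hb]

lemma decimate_mk_add_one_pow [CommSemiring R] {b : ℕ} (hb : 0 < b) (n : ℕ) :
    decimate b (mk fun k => ((k : R) + 1) ^ n) = (b : R) ^ n • mk fun k => ((k : R) + 1) ^ n := by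
  ext j
  have hindex : j * b + (b - 1) + 1 = b * (j + 1) := by
    rw [add_assoc, Nat.sub_add_cancel hb]
    ring
  rw [coeff_decimate, coeff_smul, coeff_mk, coeff_mk, smul_eq_mul, ← mul_pow]
  exact_mod_cast congrArg (fun k : ℕ => (k : R) ^ n) hindex

end Decimation

section Worpitzky

lemma card_strictMono_add {N : ℕ} {w : Fin (N + 1) → ℕ} (hw₀ : w 0 = 0) (hw : Monotone w)
    (hw₁ : ∀ t : Fin N, w t.succ ≤ w t.castSucc + 1) (m : ℕ) :
    Nat.card {g : Fin (N + 1) → Fin m // StrictMono fun i => (g i : ℕ) + w i} =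
      (m + w (Fin.last N)).choose (N + 1) := by
  let M := m + w (Fin.last N)
  have sub_mono (e : Fin (N + 1) ↪o Fin M) : Monotone fun i => (e i : ℤ) - w i := by
    refine Fin.monotone_iff_le_succ.2 fun t => ?_
    have := Fin.lt_def.1 (e.strictMono t.castSucc_lt_succ)
    have := hw₁ t
    omega
  have le_embedding (e : Fin (N + 1) ↪o Fin M) (i) : w i ≤ e i := by
    have := sub_mono e (Fin.zero_le i)
    grind
  have sub_lt (e : Fin (N + 1) ↪o Fin M) (i) : (e i : ℕ) - w i < m := by
    have := sub_mono e (Fin.le_last i)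
    grind
  have add_lt (g : Fin (N + 1) → Fin m) (i) : (g i : ℕ) + w i < M :=
    add_lt_add_of_lt_of_le (g i).2 (hw (Fin.le_last i))
  have hcard : Nat.card (Fin (N + 1) ↪o Fin M) = M.choose (N + 1) := by
    rw [Nat.card_congr Set.powersetCard.ofFinEmbEquiv, Set.powersetCard.card, Nat.card_fin]
  rw [← hcard]
  exact Nat.card_congr
    { toFun g := OrderEmbedding.ofStrictMono (fun i => ⟨g.1 i + w i, add_lt g.1 i⟩) g.2
      invFun e := ⟨fun i => ⟨e i - w i, sub_lt e i⟩, fun i l hil => by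
        simpa only [Nat.sub_add_cancel (le_embedding e _)] using Fin.lt_def.1 (e.strictMono hil)⟩
      left_inv g := by ext i; exact Nat.add_sub_cancel _ _
      right_inv e := by ext i; exact Nat.sub_add_cancel (le_embedding e i) }

/-- The number of ascents of `σ` that start before position `i`. Adding it to a word arranged by
`σ` separates exactly those equal neighbours that a stable sort leaves in place. -/
def ascentsBefore {N : ℕ} (σ : Fin (N + 1) → Fin (N + 1)) : Fin (N + 1) → ℕ :=
  Fin.partialSum fun t : Fin N => if σ t.castSucc < σ t.succ then 1 else 0

lemma ascentsBefore_succ {N : ℕ} (σ : Fin (N + 1) → Fin (N + 1)) (t : Fin N) :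
    ascentsBefore σ t.succ =
      ascentsBefore σ t.castSucc + if σ t.castSucc < σ t.succ then 1 else 0 :=
  Fin.partialSum_succ _ t

lemma descents_eq_card_filter {N : ℕ} (σ : Fin (N + 1) → Fin (N + 1)) :
    descents σ = #{t : Fin N | σ t.succ < σ t.castSucc} := by
  rw [descents, ← Fintype.card_subtype, ← Nat.card_eq_fintype_card]
  exact Nat.card_congr
    { toFun i := ⟨⟨i.1, by have := i.2.1; omega⟩, i.2.2⟩
      invFun t := ⟨t.1.castSucc, Nat.succ_lt_succ t.1.2, t.2⟩
      left_inv _ := rfl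
      right_inv _ := rfl }

lemma descents_le_sub_one {n : ℕ} (σ : Fin n → Fin n) : descents σ ≤ n - 1 := by
  cases n with
  | zero => simp [descents]
  | succ N =>
    rw [descents_eq_card_filter, Nat.add_sub_cancel]
    exact (card_le_univ _).trans_eq (Fintype.card_fin N)

lemma descents_add_ascentsBefore_last {N : ℕ} (σ : Equiv.Perm (Fin (N + 1))) :
    descents σ + ascentsBefore σ (Fin.last N) = N := by
  have ascent_iff (t : Fin N) : σ t.castSucc < σ t.succ ↔ ¬ σ t.succ < σ t.castSucc := by
    rw [not_lt, (σ.injective.ne t.castSucc_lt_succ.ne).le_iff_lt]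
  have hlast : ascentsBefore σ (Fin.last N) = #{t : Fin N | ¬ σ t.succ < σ t.castSucc} := by
    simp only [ascentsBefore, Fin.partialSum, Fin.val_last, ascent_iff, card_filter]
    rw [List.take_of_length_le (by simp), List.sum_ofFn]
  rw [descents_eq_card_filter, hlast, card_filter_add_card_filter_not, card_univ,
    Fintype.card_fin]

lemma sort_eq_iff_strictMono_add_ascentsBefore {N m : ℕ} (σ : Equiv.Perm (Fin (N + 1)))
    (f : Fin (N + 1) → Fin m) :
    Tuple.sort f = σ ↔ StrictMono fun i => (f (σ i) : ℕ) + ascentsBefore σ i := by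
  rw [eq_comm, Tuple.eq_sort_iff', Fin.strictMono_iff_lt_succ, Fin.strictMono_iff_lt_succ]
  refine forall_congr' fun t => ?_
  have lex_iff : σ.trans (Tuple.graphEquiv₁ f) t.castSucc < σ.trans (Tuple.graphEquiv₁ f) t.succ ↔
      f (σ t.castSucc) < f (σ t.succ) ∨
        f (σ t.castSucc) = f (σ t.succ) ∧ σ t.castSucc < σ t.succ := Prod.Lex.toLex_lt_toLex
  rw [lex_iff, ascentsBefore_succ, Fin.lt_def, Fin.ext_iff]
  split_ifs <;> omega

lemma card_sort_eq (k n : ℕ) (σ : Equiv.Perm (Fin n)) :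
    Nat.card {f : Fin n → Fin (k + 1) // Tuple.sort f = σ} = (k + n - descents σ).choose n := by
  cases n with
  | zero => simp [Subsingleton.elim _ σ]
  | succ N =>
    have hw : Monotone (ascentsBefore σ) := Fin.monotone_iff_le_succ.2 fun t => by
      rw [ascentsBefore_succ]; exact Nat.le_add_right _ _
    have hw₁ (t : Fin N) : ascentsBefore σ t.succ ≤ ascentsBefore σ t.castSucc + 1 := by
      rw [ascentsBefore_succ]; split_ifs <;> omega
    have htop : k + (N + 1) - descents σ = k + 1 + ascentsBefore σ (Fin.last N) := by
      have := descents_add_ascentsBefore_last σ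
      omega
    have hw₀ : ascentsBefore σ 0 = 0 := Fin.partialSum_zero _
    rw [htop, ← card_strictMono_add hw₀ hw hw₁]
    exact Nat.card_congr <| (Equiv.arrowCongr σ.symm (Equiv.refl _)).subtypeEquiv
      fun f => sort_eq_iff_strictMono_add_ascentsBefore σ f

theorem worpitzky (k n : ℕ) :
    (k + 1) ^ n = ∑ σ : Equiv.Perm (Fin n), (k + n - descents σ).choose n := by
  calc (k + 1) ^ n = Nat.card (Fin n → Fin (k + 1)) := by simp
    _ = Nat.card (Σ σ, {f : Fin n → Fin (k + 1) // Tuple.sort f = σ}) :=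
      Nat.card_congr (Equiv.sigmaFiberEquiv Tuple.sort).symm
    _ = ∑ σ : Equiv.Perm (Fin n), (k + n - descents σ).choose n := by
      simp only [Nat.card_sigma, card_sort_eq]

end Worpitzky

section Eulerian

variable {R : Type*}

/-- The Eulerian polynomial `∑_σ X ^ des(σ)`, as a power series. -/
noncomputable def eulerianSeries [Semiring R] (n : ℕ) : R⟦X⟧ :=
  ∑ σ : Equiv.Perm (Fin n), X ^ descents σ

theorem eulerianSeries_eq_mk_mul_one_sub_X_pow [CommRing R] (n : ℕ) :
    (eulerianSeries n : R⟦X⟧) = (mk fun k => ((k : R) + 1) ^ n) * (1 - X) ^ (n + 1) := by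
  have hmul : (eulerianSeries n : R⟦X⟧) * mk (fun d => ((n + d).choose n : R)) =
      mk fun k => ((k : R) + 1) ^ n := by
    ext k
    have hk := congrArg (Nat.cast : ℕ → R) (worpitzky k n)
    push_cast at hk
    rw [coeff_mk, hk, eulerianSeries, Finset.sum_mul, map_sum]
    refine sum_congr rfl fun σ _ => ?_
    rw [coeff_X_pow_mul', coeff_mk]
    split_ifs with hσ
    · rw [add_comm k n, Nat.add_sub_assoc hσ]
    · have := descents_le_sub_one σ
      rw [Nat.choose_eq_zero_of_lt (by omega), Nat.cast_zero]
  rw [← hmul, mul_assoc, mk_add_choose_mul_one_sub_pow_eq_one, mul_one]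

theorem decimate_eulerianSeries_mul_boxSeries_pow [CommRing R] {b : ℕ} (hb : 0 < b) (n : ℕ) :
    decimate b (eulerianSeries n * boxSeries b ^ (n + 1)) =
      (b : R) ^ n • (eulerianSeries n : R⟦X⟧) := by
  rw [eulerianSeries_eq_mk_mul_one_sub_X_pow, mul_assoc, ← mul_pow, mul_comm (1 - X),
    boxSeries_mul_one_sub_X, decimate_mul_one_sub_X_pow_pow hb, decimate_mk_add_one_pow hb,
    smul_mul_assoc]

lemma eulerStat_eq_coeff_eulerianSeries_div (n j : ℕ) :
    eulerStat n j = coeff j (eulerianSeries n : ℝ⟦X⟧) / n.factorial := by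
  classical
  simp only [eulerStat, eulerianSeries, map_sum, coeff_X_pow, sum_boole, eq_comm (a := j),
    Nat.card_eq_fintype_card, Fintype.card_subtype]

lemma sum_eulerStat_mul {n : ℕ} (hn : 0 < n) (F : ℕ → ℝ) :
    ∑ i : Fin n, eulerStat n i * F i =
      (∑ σ : Equiv.Perm (Fin n), F (descents σ)) / n.factorial := by
  classical
  let des (σ : Equiv.Perm (Fin n)) : Fin n :=
    ⟨descents σ, (descents_le_sub_one σ).trans_lt (Nat.sub_one_lt_of_lt hn)⟩
  rw [← sum_fiberwise univ des, sum_div]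
  refine sum_congr rfl fun i _ => ?_
  have hfiber : ∀ σ ∈ ({σ | des σ = i} : Finset (Equiv.Perm (Fin n))), F (descents σ) = F i :=
    fun σ hσ => by rw [← (mem_filter.1 hσ).2]
  rw [sum_congr rfl hfiber, sum_const, nsmul_eq_mul, eulerStat, div_mul_eq_mul_div,
    Nat.card_eq_fintype_card, Fintype.card_subtype]
  simp only [des, Fin.ext_iff]

lemma involutive_ite_le_sub {n : ℕ} (j : Fin n) :
    Function.Involutive fun i => if i ≤ j then j - i else i := by
  intro i
  by_cases hij : i ≤ j
  · have := Fin.sub_val_of_le hij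
    have hle : j - i ≤ j := by omega
    have := Fin.sub_val_of_le hle
    simp only [if_pos hij, if_pos hle]
    omega
  · simp only [if_neg hij]

/-- The permutation reversing the initial segment `{0, …, j}` and fixing all other points; it
witnesses that some permutation has exactly `j` descents. -/
def prefixReversal {n : ℕ} (j : Fin n) : Equiv.Perm (Fin n) :=
  (involutive_ite_le_sub j).toPerm

lemma val_prefixReversal {n : ℕ} (j i : Fin n) :
    (prefixReversal j i : ℕ) = if i ≤ j then (j : ℕ) - i else i := by
  rw [prefixReversal, Function.Involutive.coe_toPerm]
  split_ifs with hij
  exacts [Fin.sub_val_of_le hij, rfl]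

lemma descents_prefixReversal {n : ℕ} (j : Fin n) : descents (prefixReversal j) = j := by
  have descent_iff (i : Fin n) : (∃ h : i.1 + 1 < n,
      prefixReversal j ⟨i.1 + 1, h⟩ < prefixReversal j i) ↔ i ∈ Iio j := by
    simp only [Fin.lt_def, val_prefixReversal, Fin.le_def, mem_Iio]
    constructor
    · rintro ⟨_, h⟩
      split_ifs at h <;> omega
    · intro h
      refine ⟨by omega, ?_⟩
      rw [if_pos (by omega), if_pos (by omega)]
      omega
  rw [descents, Nat.card_congr (Equiv.subtypeEquivRight descent_iff), Nat.card_eq_fintype_card,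
    Fintype.card_coe, Fin.card_Iio]

lemma eulerStat_pos {n : ℕ} (j : Fin n) : 0 < eulerStat n j := by
  have : Nonempty {σ : Equiv.Perm (Fin n) // descents σ = j} :=
    ⟨prefixReversal j, descents_prefixReversal j⟩
  exact div_pos (Nat.cast_pos.2 Nat.card_pos) (Nat.cast_pos.2 n.factorial_pos)

end Eulerian

section CarriesMatrix

lemma PM_apply (b n : ℕ) (i j : Fin n) :
    PM b n i j = coeff j (decimate b (X ^ (i : ℕ) * boxSeries b ^ (n + 1)) : ℝ⟦X⟧) / b ^ n := by
  classical
  have hcoeff : coeff (j * b + (b - 1)) (X ^ (i : ℕ) * boxSeries b ^ (n + 1) : ℝ⟦X⟧) =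
      #{x : Fin n → Fin b | i + ∑ t, (x t : ℕ) ≤ j * b + (b - 1) ∧
        j * b + (b - 1) < i + ∑ t, (x t : ℕ) + b} := by
    simp only [pow_succ, boxSeries_pow, Finset.sum_mul, mul_sum, map_sum, ← mul_assoc, ← pow_add,
      coeff_X_pow_mul_boxSeries, sum_boole]
  rw [coeff_decimate, hcoeff, PM, of_apply, Nat.card_eq_fintype_card, Fintype.card_subtype]
  congr! 4 with x
  have hb : 0 < b := (x i).pos
  rw [Nat.succ_mul]
  omega

lemma isTP2_PM (b n : ℕ) : IsTP2 (PM b n) := by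
  intro i i' hi j j' hj
  simp only [PM_apply, coeff_decimate, div_mul_div_comm]
  gcongr ?_ / _
  exact (isPF2_boxSeries b).pow (n + 1) hi (by gcongr; exact hj)

theorem eulerStat_vecMul_PM {b : ℕ} (hb : 0 < b) (n : ℕ) :
    (fun i : Fin n => eulerStat n i) ᵥ* PM b n = fun j : Fin n => eulerStat n j := by
  ext j
  have hsum : ∑ σ : Equiv.Perm (Fin n),
      coeff j (decimate b (X ^ descents σ * boxSeries b ^ (n + 1)) : ℝ⟦X⟧) =
        b ^ n * coeff j (eulerianSeries n : ℝ⟦X⟧) := by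
    rw [← smul_eq_mul, ← coeff_smul, ← decimate_eulerianSeries_mul_boxSeries_pow hb,
      eulerianSeries, Finset.sum_mul, map_sum, map_sum]
  have hbn : (b : ℝ) ^ n ≠ 0 := by positivity
  calc ∑ i : Fin n, eulerStat n i * PM b n i j
      = (∑ σ : Equiv.Perm (Fin n),
          coeff j (decimate b (X ^ descents σ * boxSeries b ^ (n + 1)) : ℝ⟦X⟧) / b ^ n) /
            n.factorial := by
        simp only [PM_apply]
        exact sum_eulerStat_mul j.pos fun k =>
          coeff j (decimate b (X ^ k * boxSeries b ^ (n + 1)) : ℝ⟦X⟧) / b ^ n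
    _ = eulerStat n j := by
        rw [← sum_div, hsum, mul_div_cancel_left₀ _ hbn, eulerStat_eq_coeff_eulerianSeries_div]

theorem antitone_PM_pow_div_eulerStat {b n : ℕ} (hb : 0 < b) (hn : 0 < n) (r : ℕ) :
    Antitone fun j : Fin n => (PM b n ^ r) ⟨0, hn⟩ j / eulerStat n j := by
  have hbot : IsBot (⟨0, hn⟩ : Fin n) := fun j => Nat.zero_le j
  have hstart : LikelihoodRatioLE (Pi.single ⟨0, hn⟩ 1) fun j : Fin n => eulerStat n j :=
    .single_of_isBot hbot fun j => (eulerStat_pos j).le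
  have hrow := hstart.vecMul_pow_of_stationary (isTP2_PM b n) (eulerStat_vecMul_PM hb n) r
  rw [single_one_vecMul] at hrow
  exact hrow.antitone_div eulerStat_pos

end CarriesMatrix

/-- **Theorem 7(1) of Diaconis–Fulman**: for every `r ≥ 0` the function
`j ↦ P_b^r(0,j)/π(j)` is non-increasing on `{0,…,n−1}`; consequently the separation
distance of the carries chain started at `0`,
`sep(r) = max_j [1 − P_b^r(0,j)/π(j)]`, is attained at the state `j = n−1`. -/
theorem separation_attained_at_last (b n : ℕ) (hb : 2 ≤ b) (hn : 1 ≤ n) (r : ℕ) :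
    (∀ j j' : Fin n, j ≤ j' →
        (PM b n ^ r) ⟨0, hn⟩ j' / eulerStat n (j' : ℕ) ≤
          (PM b n ^ r) ⟨0, hn⟩ j / eulerStat n (j : ℕ)) ∧
      (∀ j : Fin n,
        1 - (PM b n ^ r) ⟨0, hn⟩ j / eulerStat n (j : ℕ) ≤
          1 - (PM b n ^ r) ⟨0, hn⟩ ⟨n - 1, by omega⟩ / eulerStat n (n - 1)) := by
  have hanti := antitone_PM_pow_div_eulerStat (zero_lt_two.trans_le hb) hn r
  exact ⟨fun _ _ hjj' => hanti hjj',
    fun j => sub_le_sub_left (hanti (Fin.le_def.2 (Nat.le_sub_one_of_lt j.2))) 1⟩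
end

section
/- Fix an integer k ≥ 1 and integers a, b ≥ 1, and let K_a, K_b, K_{ab} be the k×k multiplication-carries matrices for multiplication by k in bases a, b and ab respectively. Then K_{ab} = K_a · K_b as matrices; i.e., for all 0 ≤ i,j ≤ k−1, K_{ab}(i,j) = Σ_{l=0}^{k−1} K_a(i,l)·K_b(l,j). -/
/-- The multiplication-carries matrix: `K_b(i,j)` is the transition probability from
carry `i` to carry `j` when multiplying a number with uniform random base-`b` digits by
`k`, i.e. `K_b(i,j) = (1/b)·#{d ∈ {0,…,b−1} : ⌊(i + k·d)/b⌋ = j}`. -/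
noncomputable def Kmat (k b : ℕ) (i j : ℕ) : ℝ :=
  (Nat.card {d : Fin b // (i + k * (d : ℕ)) / b = j} : ℝ) / b

/-!
Write a base-`a * b` digit as `x + a * y` with `x` a base-`a` digit and `y` a base-`b` digit.
Processing it produces the same outgoing carry as processing first `x` in base `a` and then `y` in
base `b`, and if the digit is uniform then `x` and `y` are uniform and independent. So one step of
the carries chain in base `a * b` is a step in base `a` followed by a step in base `b`.
-/

open scoped BigOperators

/-- The outgoing carry when the base-`b` digit `d` is multiplied by `k` with incoming carry `i`.
It is meant for `0 < b`, `d < b` and `i < k`, but is defined for all natural numbers. -/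
def carry (k b i d : ℕ) : ℕ :=
  (i + k * d) / b

section carry

variable {k a b i d : ℕ}

lemma carry_lt (hi : i < k) (hd : d < b) : carry k b i d < k := by
  refine Nat.div_lt_of_lt_mul ?_
  calc i + k * d < k + k * d := Nat.add_lt_add_right hi _
    _ = (d + 1) * k := by ring
    _ ≤ b * k := Nat.mul_le_mul_right k hd

lemma carry_mul_base (ha : 0 < a) (x y : ℕ) :
    carry k (a * b) i (x + a * y) = carry k b (carry k a i x) y := by
  unfold carry
  calc (i + k * (x + a * y)) / (a * b)
      = (i + k * x + a * (k * y)) / a / b := by rw [Nat.div_div_eq_div_mul]; ring_nf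
    _ = ((i + k * x) / a + k * y) / b := by rw [Nat.add_mul_div_left _ _ ha]

end carry

lemma expect_fin_mul {M : Type*} [AddCommMonoid M] [Module ℚ≥0 M] (a b : ℕ) (f : ℕ → M) :
    𝔼 d : Fin (a * b), f d = 𝔼 x : Fin a, 𝔼 y : Fin b, f (x + a * y) := by
  rw [mul_comm a b, Finset.expect_comm, ← Finset.expect_product', Finset.univ_product_univ]
  exact (Fintype.expect_equiv finProdFinEquiv _ _ fun _ => rfl).symm

lemma Kmat_eq_expect (k b i j : ℕ) :
    Kmat k b i j = 𝔼 d : Fin b, if carry k b i d = j then 1 else 0 := by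
  rw [Fintype.expect_eq_sum_div_card, Finset.sum_boole, Fintype.card_fin, ← Fintype.card_subtype,
    ← Nat.card_eq_fintype_card]
  rfl

lemma sum_Kmat_mul_eq_expect {k i : ℕ} (hi : i < k) (b : ℕ) (f : ℕ → ℝ) :
    ∑ l ∈ Finset.range k, Kmat k b i l * f l = 𝔼 d : Fin b, f (carry k b i d) := by
  simp_rw [Kmat_eq_expect, Finset.expect_mul, ← Finset.expect_sum_comm]
  refine Finset.expect_congr rfl fun d _ => ?_
  have carry_mem : carry k b i d ∈ Finset.range k := Finset.mem_range.2 (carry_lt hi d.isLt)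
  simp only [ite_mul, one_mul, zero_mul, Finset.sum_ite_eq, if_pos carry_mem]

/-- **The multiplication-carries matrices multiply like their bases**: for a fixed
multiplier `k`, the carries matrices satisfy `K_{ab} = K_a · K_b`. -/
theorem Kmat_mul (k a b : ℕ) (hk : 1 ≤ k) (ha : 1 ≤ a) (hb : 1 ≤ b)
    (i j : ℕ) (hi : i < k) (hj : j < k) :
    Kmat k (a * b) i j = ∑ l ∈ Finset.range k, Kmat k a i l * Kmat k b l j := by
  calc Kmat k (a * b) i j
      = 𝔼 d : Fin (a * b), if carry k (a * b) i d = j then 1 else 0 := Kmat_eq_expect ..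
    _ = 𝔼 x : Fin a, 𝔼 y : Fin b, if carry k (a * b) i (x + a * y) = j then 1 else 0 :=
        expect_fin_mul a b fun d => if carry k (a * b) i d = j then 1 else 0
    _ = 𝔼 x : Fin a, Kmat k b (carry k a i x) j := by simp only [carry_mul_base ha, Kmat_eq_expect]
    _ = ∑ l ∈ Finset.range k, Kmat k a i l * Kmat k b l j :=
        (sum_Kmat_mul_eq_expect hi a fun l => Kmat k b l j).symm
end
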